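/- In the (32,16) polar code with information set I = {11,13,14,15,19,21,22,...,31}, the minimum Hamming weight of a nonzero codeword is 4. -/

import Mathlib

open Matrix Finset

/-- The 2×2 kernel `G₂ = [[1,0],[1,1]]` over `F₂`. -/
def G2 : Matrix (Fin 2) (Fin 2) (ZMod 2) := !![1, 0; 1, 1]

/-- `GN n = G₂^{⊗n}`, the `n`-th Kronecker power of `G₂`. -/
def GN : (n : ℕ) → Matrix (Fin (2 ^ n)) (Fin (2 ^ n)) (ZMod 2)
  | 0 => 1
  | n + 1 =>
    Matrix.reindex (finProdFinEquiv.trans (finCongr (by rw [pow_succ]; ring)))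
      (finProdFinEquiv.trans (finCongr (by rw [pow_succ]; ring)))
      (Matrix.kroneckerMap (· * ·) G2 (GN n))

/-- Hamming weight of a vector over `F₂`. -/
def wt {N : ℕ} (v : Fin N → ZMod 2) : ℕ := (Finset.univ.filter fun j => v j ≠ 0).card

/-- The support of the binary representation of `k`. -/
def bsupp (k : ℕ) : Finset ℕ := (Finset.range k).filter (fun a => k.testBit a = true)

/-- Number of ones in the binary representation of `k`. -/
def popcount (k : ℕ) : ℕ := (bsupp k).card

/-- Parity checks of `RM(3,5)`: the five bits of the position, and (for `a ≥ 5`) the constant 1. -/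
def chk (a : Fin 6) (j : Fin (2 ^ 5)) : ZMod 2 :=
  if a.val = 5 ∨ j.val.testBit a.val = true then 1 else 0

lemma chk_gen : ∀ i ∈ ({11, 13, 14, 15, 19, 21, 22, 23, 24, 25, 26, 27, 28, 29, 30, 31} :
    Finset (Fin (2 ^ 5))), ∀ a : Fin 6, ∑ j, GN 5 i j * chk a j = 0 := by
  decide +kernel

lemma chk_sep : ∀ i j : Fin (2 ^ 5), (∀ a : Fin 6, chk a i + chk a j = 0) → i = j := by
  decide +kernel

lemma wt_row : GN 5 24 ≠ 0 ∧ wt (GN 5 24) = 4 := by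
  decide +kernel

lemma chk_span (x : Fin (2 ^ 5) → ZMod 2) (hx : x ∈ Submodule.span (ZMod 2)
        ((fun i => GN 5 i) ''
          (({11, 13, 14, 15, 19, 21, 22, 23, 24, 25, 26, 27, 28, 29, 30, 31} :
            Finset (Fin (2 ^ 5))) : Set (Fin (2 ^ 5))))) (a : Fin 6) :
    ∑ j, x j * chk a j = 0 := by
  induction hx using Submodule.span_induction with
  | mem x h =>
    obtain ⟨i, hi, rfl⟩ := h
    exact chk_gen i (Finset.mem_coe.1 hi) a
  | zero => simp
  | add x y _ _ hx hy => simp only [Pi.add_apply, add_mul, Finset.sum_add_distrib, hx, hy, add_zero]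
  | smul c x _ hx => simp only [Pi.smul_apply, smul_eq_mul, mul_assoc, ← Finset.mul_sum, hx, mul_zero]

lemma chk_supp (x : Fin (2 ^ 5) → ZMod 2) (a : Fin 6) :
    ∑ j, x j * chk a j = ∑ j ∈ Finset.univ.filter (fun j => x j ≠ 0), chk a j := by
  rw [Finset.sum_filter]
  refine Finset.sum_congr rfl fun j _ => ?_
  have h : ∀ u v : ZMod 2, u * v = if u ≠ 0 then v else 0 := by decide
  exact h _ _

theorem min_weight_polar_32_16 :
    IsLeast {w : ℕ | ∃ x ∈ Submodule.span (ZMod 2)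
        ((fun i => GN 5 i) ''
          ({11, 13, 14, 15, 19, 21, 22, 23, 24, 25, 26, 27, 28, 29, 30, 31} :
            Finset (Fin (2 ^ 5)))),
      x ≠ 0 ∧ wt x = w} 4 := by
  constructor
  · exact ⟨GN 5 24, Submodule.subset_span ⟨24, Finset.mem_coe.2 (by decide), rfl⟩, wt_row⟩
  · rintro w ⟨x, hx, hx0, rfl⟩
    have hs : ∀ a, ∑ j ∈ Finset.univ.filter (fun j => x j ≠ 0), chk a j = 0 := fun a => by
      rw [← chk_supp]; exact chk_span x hx a
    have hne : (Finset.univ.filter (fun j => x j ≠ 0)).Nonempty := by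
      obtain ⟨j, hj⟩ := Function.ne_iff.1 hx0
      exact ⟨j, by simpa using hj⟩
    unfold wt
    generalize Finset.univ.filter (fun j => x j ≠ 0) = s at hs hne
    have hone : ∀ j, chk 5 j = 1 := fun j => by simp [chk]
    have heven : ((s.card : ℕ) : ZMod 2) = 0 := by
      have := hs 5
      simpa [hone] using this
    have h2 : 2 ∣ s.card := (ZMod.natCast_eq_zero_iff _ _).1 heven
    have hpos := hne.card_pos
    by_contra hlt
    have hc : s.card = 2 := by omega
    obtain ⟨i, j, hij, rfl⟩ := Finset.card_eq_two.1 hc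
    refine hij (chk_sep i j fun a => ?_)
    rw [← Finset.sum_pair hij]
    exact hs a
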